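/- arXiv:1308.0833 — 8 statements merged into one kernel-verified Lean document; each statement's English description precedes it below -/
import Mathlib

section
/- Let m, n be positive integers, and let ℋ be a nonempty finite universal class of hash functions from [m] to [n²]. Then for every set S ⊆ [m] with |S| ≤ n, the fraction of functions h ∈ ℋ that have a collision on S (i.e., for which there exist distinct i, j ∈ S with h(i) = h(j)) is strictly less than 1/2. -/
/-- If `H` is a nonempty finite universal class of hash functions from
`[m]` to `[n²]` (i.e. for any two distinct `i j : Fin m`, the fraction of `h ∈ H`
with `h i = h j` is at most `1/n²`), then for every `S ⊆ [m]` with `|S| ≤ n`,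
the fraction of `h ∈ H` having a collision on `S` is strictly less than `1/2`. -/
theorem stmt0 (m n : ℕ) (hm : 0 < m) (hn : 0 < n)
    (H : Finset (Fin m → Fin (n ^ 2))) (hne : H.Nonempty)
    (huniv : ∀ i j : Fin m, i ≠ j →
      ((H.filter (fun h => h i = h j)).card : ℚ) / H.card ≤ 1 / (n ^ 2))
    (S : Finset (Fin m)) (hS : S.card ≤ n) :
    ((H.filter (fun h => ∃ i ∈ S, ∃ j ∈ S, i ≠ j ∧ h i = h j)).card : ℚ) / H.card
      < 1 / 2 := by
  classical
  have hH : (0 : ℚ) < H.card := by exact_mod_cast hne.card_pos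
  have hn' : (0 : ℚ) < (n : ℚ) ^ 2 := by positivity
  set C := H.filter (fun h => ∃ i ∈ S, ∃ j ∈ S, i ≠ j ∧ h i = h j) with hC
  -- every colliding function is hit by at least two ordered pairs
  have h1 : 2 * C.card ≤ ∑ p ∈ S.offDiag, (H.filter (fun h => h p.1 = h p.2)).card := by
    have hswap : ∑ p ∈ S.offDiag, (H.filter (fun h => h p.1 = h p.2)).card
        = ∑ h ∈ H, (S.offDiag.filter (fun p => h p.1 = h p.2)).card := by
      simp only [Finset.card_filter]
      exact Finset.sum_comm
    rw [hswap]
    calc 2 * C.card = ∑ h ∈ C, 2 := by simp [mul_comm]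
      _ ≤ ∑ h ∈ C, (S.offDiag.filter (fun p => h p.1 = h p.2)).card := by
        apply Finset.sum_le_sum
        intro h hh
        obtain ⟨_, i, hi, j, hj, hij, he⟩ := Finset.mem_filter.1 hh
        apply Finset.one_lt_card.2
        refine ⟨(i, j), ?_, (j, i), ?_, ?_⟩
        · simp [hi, hj, hij, he]
        · simp [hi, hj, hij.symm, he]
        · intro h'
          exact hij (Prod.mk.inj h').1
      _ ≤ _ := Finset.sum_le_sum_of_subset (Finset.filter_subset _ _)
  have h2 : ((∑ p ∈ S.offDiag, (H.filter (fun h => h p.1 = h p.2)).card : ℕ) : ℚ)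
      ≤ S.offDiag.card * (1 / (n : ℚ) ^ 2 * H.card) := by
    push_cast
    rw [← nsmul_eq_mul]
    apply Finset.sum_le_card_nsmul
    intro p hp
    exact (div_le_iff₀ hH).1 (huniv p.1 p.2 (Finset.mem_offDiag.1 hp).2.2)
  have h3 : S.offDiag.card < n ^ 2 := by
    rw [Finset.offDiag_card]
    have : S.card * S.card ≤ n * n := Nat.mul_le_mul hS hS
    have : 0 < n * n := Nat.mul_pos hn hn
    rw [pow_two]
    rcases Nat.eq_zero_or_pos S.card with h0 | h0
    · rw [h0]; omega
    · omega
  have h3' : (S.offDiag.card : ℚ) < (n : ℚ) ^ 2 := by exact_mod_cast h3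
  have h1' : (2 : ℚ) * C.card ≤
      ((∑ p ∈ S.offDiag, (H.filter (fun h => h p.1 = h p.2)).card : ℕ) : ℚ) := by
    exact_mod_cast h1
  have h4 : (S.offDiag.card : ℚ) * (1 / (n : ℚ) ^ 2 * H.card) < H.card := by
    calc (S.offDiag.card : ℚ) * (1 / (n : ℚ) ^ 2 * H.card)
        < (n : ℚ) ^ 2 * (1 / (n : ℚ) ^ 2 * H.card) :=
          mul_lt_mul_of_pos_right h3' (by positivity)
      _ = H.card := by field_simp
  rw [div_lt_iff₀ hH]
  linarith
end

section
/- Let m, n be positive integers, let ℋ be a nonempty finite universal class of hash functions from [m] to [n], and let S ⊆ [m] be a set of size exactly n. For h ∈ ℋ and i ∈ [n], let N_i(h) = #{j ∈ S : h(j) = i}. Then the average over h ∈ ℋ of Σ_{i∈[n]} N_i(h)² is strictly less than 2n; that is, (1/#ℋ) · Σ_{h∈ℋ} Σ_{i∈[n]} N_i(h)² < 2n. -/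
/-- Let `H` be a nonempty finite universal class of hash functions
from `[m]` to `[n]` and `S ⊆ [m]` of size exactly `n`.  For `h ∈ H` and `i ∈ [n]`
let `N_i(h) = #{j ∈ S : h j = i}`.  Then the average over `h ∈ H` of
`Σ_{i∈[n]} N_i(h)²` is strictly less than `2n`. -/
theorem stmt2 (m n : ℕ) (hm : 0 < m) (hn : 0 < n)
    (H : Finset (Fin m → Fin n)) (hne : H.Nonempty)
    (huniv : ∀ i j : Fin m, i ≠ j →
      ((H.filter (fun h => h i = h j)).card : ℚ) / H.card ≤ 1 / n)
    (S : Finset (Fin m)) (hS : S.card = n) :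
    ((∑ h ∈ H, ∑ i : Fin n, ((S.filter (fun j => h j = i)).card ^ 2 : ℚ)) : ℚ)
        / H.card < 2 * n := by
  have hH : (0 : ℚ) < H.card := by exact_mod_cast hne.card_pos
  have hn' : (0 : ℚ) < n := by exact_mod_cast hn
  have key : ∀ h : Fin m → Fin n,
      ∑ i : Fin n, ((S.filter (fun j => h j = i)).card ^ 2 : ℚ)
        = ∑ a ∈ S, ∑ b ∈ S, (if h a = h b then (1 : ℚ) else 0) := by
    intro h
    have h1 : ∀ i : Fin n, ((S.filter (fun j => h j = i)).card ^ 2 : ℚ)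
        = ∑ a ∈ S, ∑ b ∈ S, (if h a = i then (1 : ℚ) else 0) * (if h b = i then 1 else 0) := by
      intro i
      rw [← Finset.sum_mul_sum, Finset.sum_boole, sq]
    simp_rw [h1]
    rw [Finset.sum_comm]
    refine Finset.sum_congr rfl fun a _ => ?_
    rw [Finset.sum_comm]
    refine Finset.sum_congr rfl fun b _ => ?_
    simp [eq_comm]
  have bnd : ∀ a b : Fin m, ∑ h ∈ H, (if h a = h b then (1 : ℚ) else 0)
      ≤ H.card / n + (if a = b then (H.card - H.card / n : ℚ) else 0) := by
    intro a b
    by_cases hab : a = b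
    · subst hab
      simp
    · have := huniv a b hab
      rw [div_le_iff₀ hH] at this
      rw [Finset.sum_boole, if_neg hab, add_zero]
      calc _ ≤ _ := this
        _ = _ := by ring
  rw [div_lt_iff₀ hH]
  calc _ = ∑ a ∈ S, ∑ b ∈ S, ∑ h ∈ H, (if h a = h b then (1 : ℚ) else 0) := by
        simp_rw [key]
        rw [Finset.sum_comm]
        refine Finset.sum_congr rfl fun a _ => ?_
        rw [Finset.sum_comm]
    _ ≤ ∑ a ∈ S, ∑ b ∈ S,
        ((H.card : ℚ) / n + (if a = b then (H.card - H.card / n : ℚ) else 0)) :=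
        Finset.sum_le_sum fun a _ => Finset.sum_le_sum fun b _ => bnd a b
    _ = ∑ a ∈ S, ((n : ℚ) * (H.card / n) + (H.card - H.card / n : ℚ)) := by
        refine Finset.sum_congr rfl fun a ha => ?_
        rw [Finset.sum_add_distrib, Finset.sum_ite_eq, if_pos ha, Finset.sum_const, hS,
          nsmul_eq_mul]
    _ = 2 * n * H.card - H.card := by
        rw [Finset.sum_const, hS, nsmul_eq_mul]
        field_simp
        ring
    _ < _ := by linarith
end

section
/- Let p be a prime and let n, m be positive integers with n² ≤ m ≤ p. Then for every set S ⊆ [m] with |S| ≤ n, there exists a unit a ∈ ℤ_p^* such that the function h_{p,m,n²,a} : [m] → [n²] is injective on S (i.e., h_{p,m,n²,a} has no collision on S). -/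
lemma bad_card (p k x y : ℕ) (hp : p.Prime) (hx : x < p) (hy : y < p) (hxy : x ≠ y) :
    ((Finset.Ico 1 p).filter (fun a => a * y % p ≤ a * x % p ∧
      (a * x % p) % k = (a * y % p) % k)).card ≤ (p - 1) / k := by
  haveI : Fact p.Prime := ⟨hp⟩
  have hlt : ∀ z : ℕ, z % p < p := fun z => Nat.mod_lt _ hp.pos
  have cst : ∀ {b c : ℕ}, b < p → c < p → (b : ZMod p) = c → b = c := by
    intro b c hb hc h
    rw [ZMod.natCast_eq_natCast_iff'] at h
    rwa [Nat.mod_eq_of_lt hb, Nat.mod_eq_of_lt hc] at h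
  have hne : (x : ZMod p) - y ≠ 0 := fun h => hxy (cst hx hy (sub_eq_zero.mp h))
  have key : ∀ a : ℕ, a * y % p ≤ a * x % p →
      ((a * x % p - a * y % p : ℕ) : ZMod p) = a * ((x : ZMod p) - y) := by
    intro a h
    rw [Nat.cast_sub h, ZMod.natCast_mod, ZMod.natCast_mod]
    push_cast
    ring
  rw [← Nat.Ioc_filter_dvd_card_eq_div]
  apply Finset.card_le_card_of_injOn (fun a => a * x % p - a * y % p)
  · intro a ha
    simp only [Finset.coe_filter, Finset.mem_Ico, Set.mem_setOf_eq, Finset.mem_Ioc] at ha ⊢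
    obtain ⟨⟨h1, h2⟩, h3, h4⟩ := ha
    have := hlt (a * x)
    refine ⟨⟨?_, by omega⟩, ?_⟩
    · rw [Nat.pos_iff_ne_zero]
      intro h0
      have h5 := key a h3
      rw [h0, Nat.cast_zero] at h5
      rcases mul_eq_zero.mp h5.symm with h6 | h6
      · have := cst h2 hp.pos (by simpa using h6)
        omega
      · exact hne h6
    · exact (Nat.modEq_iff_dvd' h3).mp h4.symm
  · intro a ha b hb h
    simp only [Finset.coe_filter, Finset.mem_Ico, Set.mem_setOf_eq] at ha hb h
    have h5 := key a ha.2.1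
    rw [h, key b hb.2.1] at h5
    exact (cst hb.1.2 ha.1.2 (mul_right_cancel₀ hne h5)).symm

/-- Let `p` be a prime and `n, m` positive integers with `n² ≤ m ≤ p`.
For every `S ⊆ [m]` with `|S| ≤ n`, there exists a unit `a ∈ ℤ_p^*`
(represented as `1 ≤ a < p`) such that the hash function
`h_{p,m,n²,a}(x) = ((a·x) mod p) mod n²` is injective on `S`. -/
theorem stmt3 (p m n : ℕ) (hp : p.Prime) (hn : 0 < n) (hm : n ^ 2 ≤ m) (hmp : m ≤ p)
    (S : Finset ℕ) (hSm : S ⊆ Finset.range m) (hS : S.card ≤ n) :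
    ∃ a ∈ Finset.Ico 1 p,
      ∀ x ∈ S, ∀ y ∈ S, (a * x % p) % n ^ 2 = (a * y % p) % n ^ 2 → x = y := by
  by_contra! hcon
  have hlt : ∀ x ∈ S, x < p := fun x hx =>
    lt_of_lt_of_le (Finset.mem_range.mp (hSm hx)) hmp
  have hsub : Finset.Ico 1 p ⊆ S.offDiag.biUnion (fun q =>
      (Finset.Ico 1 p).filter (fun a => a * q.2 % p ≤ a * q.1 % p ∧
      (a * q.1 % p) % n ^ 2 = (a * q.2 % p) % n ^ 2)) := by
    intro a ha
    obtain ⟨x, hx, y, hy, h, hxy⟩ := hcon a ha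
    rw [Finset.mem_biUnion]
    rcases le_total (a * y % p) (a * x % p) with hle | hle
    · exact ⟨(x, y), Finset.mem_offDiag.mpr ⟨hx, hy, hxy⟩,
        Finset.mem_filter.mpr ⟨ha, hle, h⟩⟩
    · exact ⟨(y, x), Finset.mem_offDiag.mpr ⟨hy, hx, hxy.symm⟩,
        Finset.mem_filter.mpr ⟨ha, hle, h.symm⟩⟩
  have h1 := (Finset.card_le_card hsub).trans
    (Finset.card_biUnion_le_card_mul _ _ ((p - 1) / n ^ 2) (by
      intro q hq
      obtain ⟨hx, hy, hxy⟩ := Finset.mem_offDiag.mp hq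
      exact bad_card p _ q.1 q.2 hp (hlt _ hx) (hlt _ hy) hxy))
  rw [Nat.card_Ico, Finset.offDiag_card] at h1
  have h2 : S.card * S.card - S.card < n ^ 2 := by
    have : S.card * S.card ≤ n * n := Nat.mul_le_mul hS hS
    have : 0 < n * n := Nat.mul_pos hn hn
    rw [pow_two]
    rcases Nat.eq_zero_or_pos S.card with h0 | h0
    · rw [h0]; omega
    · have := Nat.mul_pos h0 h0
      omega
  have h3 := Nat.div_mul_le_self (p - 1) (n ^ 2)
  have h4 : 0 < p - 1 := by have := hp.two_le; omega
  rcases Nat.eq_zero_or_pos ((p - 1) / n ^ 2) with h0 | h0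
  · rw [h0] at h1; omega
  · have := Nat.mul_lt_mul_of_pos_right h2 h0
    rw [mul_comm (n ^ 2)] at this
    omega
end

section
/- Let A and B be n×m complex matrices with orthonormal columns, i.e. A*A = B*B = I_m where A* denotes the conjugate transpose, and suppose the discriminant matrix D = A*B is Hermitian. Let W = (2BB* − I_n)(2AA* − I_n). If θ is a real number with 0 < θ < π and cos θ is an eigenvalue of D, then both e^{2iθ} and e^{−2iθ} are eigenvalues of W; i.e., there exist nonzero vectors w₊, w₋ ∈ ℂ^n with W·w₊ = e^{2iθ}·w₊ and W·w₋ = e^{−2iθ}·w₋. -/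
open Matrix

theorem stmt8_aux (n m : ℕ) (A B : Matrix (Fin n) (Fin m) ℂ)
    (hA : Aᴴ * A = 1) (hB : Bᴴ * B = 1)
    (c z : ℂ) (hz : z * z + 1 = 2 * c * z) (hc : c * c ≠ 1)
    (v : Fin m → ℂ) (hv : v ≠ 0)
    (h1 : (Aᴴ * B) *ᵥ v = c • v) (h2 : (Bᴴ * A) *ᵥ v = c • v) :
    ∃ w : Fin n → ℂ, w ≠ 0 ∧
        (((2 : ℂ) • (B * Bᴴ) - 1) * ((2 : ℂ) • (A * Aᴴ) - 1)).mulVec w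
          = (z * z) • w := by
  have a1 : Aᴴ *ᵥ (A *ᵥ v) = v := by rw [mulVec_mulVec, hA, one_mulVec]
  have b1 : Bᴴ *ᵥ (B *ᵥ v) = v := by rw [mulVec_mulVec, hB, one_mulVec]
  have a2 : Aᴴ *ᵥ (B *ᵥ v) = c • v := by rw [mulVec_mulVec, h1]
  have b2 : Bᴴ *ᵥ (A *ᵥ v) = c • v := by rw [mulVec_mulVec, h2]
  refine ⟨A *ᵥ v - z • (B *ᵥ v), ?_, ?_⟩
  · intro h
    have e1 := congrArg (fun x => Aᴴ *ᵥ x) h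
    have e2 := congrArg (fun x => Bᴴ *ᵥ x) h
    simp only [mulVec_sub, mulVec_smul, a1, a2, b1, b2, mulVec_zero] at e1 e2
    obtain ⟨i, hi⟩ := Function.ne_iff.mp hv
    have f1 := congrFun e1 i
    have f2 := congrFun e2 i
    simp only [Pi.sub_apply, Pi.smul_apply, smul_eq_mul, Pi.zero_apply] at f1 f2 hi
    have g2 : c = z := by
      apply mul_right_cancel₀ hi
      linear_combination f2
    subst g2
    apply hc
    apply mul_right_cancel₀ hi
    linear_combination -f1
  · simp only [← mulVec_mulVec, sub_mulVec, smul_mulVec, one_mulVec, mulVec_sub, mulVec_smul,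
      a1, a2, b1, b2]
    ext i
    simp only [Pi.sub_apply, Pi.smul_apply, smul_eq_mul]
    generalize (A *ᵥ v) i = x
    generalize (B *ᵥ v) i = y
    linear_combination (-x + y * (z + 2 * c)) * hz

/-- Spectral Lemma, part 2: With `A, B` as in part 1
(`AᴴA = BᴴB = I`, `D = AᴴB` Hermitian) and
`W = (2BBᴴ − I)(2AAᴴ − I)`, if `0 < θ < π` and `cos θ` is an eigenvalue of `D`,
then `e^{2iθ}` and `e^{−2iθ}` are eigenvalues of `W`. -/
theorem stmt8 (n m : ℕ) (A B : Matrix (Fin n) (Fin m) ℂ)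
    (hA : Aᴴ * A = 1) (hB : Bᴴ * B = 1)
    (hD : (Aᴴ * B).IsHermitian)
    (θ : ℝ) (hθ0 : 0 < θ) (hθπ : θ < Real.pi)
    (v : Fin m → ℂ) (hv : v ≠ 0)
    (hev : (Aᴴ * B).mulVec v = (Real.cos θ : ℂ) • v) :
    (∃ w : Fin n → ℂ, w ≠ 0 ∧
        (((2 : ℂ) • (B * Bᴴ) - 1) * ((2 : ℂ) • (A * Aᴴ) - 1)).mulVec w
          = Complex.exp (2 * θ * Complex.I) • w) ∧
      (∃ w : Fin n → ℂ, w ≠ 0 ∧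
        (((2 : ℂ) • (B * Bᴴ) - 1) * ((2 : ℂ) • (A * Aᴴ) - 1)).mulVec w
          = Complex.exp (-(2 * θ * Complex.I)) • w) := by
  have h2 : (Bᴴ * A) *ᵥ v = (Real.cos θ : ℂ) • v := by
    have : Bᴴ * A = Aᴴ * B := by
      have h := hD.eq
      rwa [conjTranspose_mul, conjTranspose_conjTranspose] at h
    rw [this, hev]
  have hs : Real.sin θ ≠ 0 := (Real.sin_pos_of_pos_of_lt_pi hθ0 hθπ).ne'
  have hc : (Real.cos θ : ℂ) * (Real.cos θ : ℂ) ≠ 1 := by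
    intro h
    have h' : Real.cos θ * Real.cos θ = 1 := by exact_mod_cast h
    apply hs
    have := Real.sin_sq_add_cos_sq θ
    have : Real.sin θ ^ 2 = 0 := by linarith
    exact pow_eq_zero_iff (two_ne_zero) |>.mp this
  have hm : Complex.exp (θ * Complex.I) * Complex.exp (-(θ * Complex.I)) = 1 := by
    rw [← Complex.exp_add, add_neg_cancel, Complex.exp_zero]
  have hcos : 2 * (Real.cos θ : ℂ)
      = Complex.exp (θ * Complex.I) + Complex.exp (-(θ * Complex.I)) := by
    rw [Complex.ofReal_cos, Complex.cos, neg_mul]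
    ring
  constructor
  · have := stmt8_aux n m A B hA hB (Real.cos θ) (Complex.exp (θ * Complex.I))
      (by rw [hcos]; linear_combination -hm) hc v hv hev h2
    rw [← Complex.exp_add] at this
    convert this using 6
    ring
  · have := stmt8_aux n m A B hA hB (Real.cos θ) (Complex.exp (-(θ * Complex.I)))
      (by rw [hcos]; linear_combination -hm) hc v hv hev h2
    rw [← Complex.exp_add] at this
    convert this using 6
    ring
end

section
/- Let A and B be n×m complex matrices with orthonormal columns, i.e. A*A = B*B = I_m where A* denotes the conjugate transpose, and suppose the discriminant matrix D = A*B is Hermitian. Let W = (2BB* − I_n)(2AA* − I_n). If v ∈ ℂ^n lies in the sum 𝒜 + ℬ of the column spaces 𝒜 of A and ℬ of B, and Wv = v, then v ∈ 𝒜 ∩ ℬ; equivalently, AA*v = v and BB*v = v. -/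
open Matrix

/-- Spectral Lemma, part 5: With `A, B` as before
(`AᴴA = BᴴB = I`, `D = AᴴB` Hermitian) and `W = (2BBᴴ − I)(2AAᴴ − I)`,
if `v` lies in the sum `𝒜 + ℬ` of the column spaces of `A` and `B`
and `Wv = v`, then `v ∈ 𝒜 ∩ ℬ`, i.e. `AAᴴv = v` and `BBᴴv = v`. -/
theorem stmt10 (n m : ℕ) (A B : Matrix (Fin n) (Fin m) ℂ)
    (hA : Aᴴ * A = 1) (hB : Bᴴ * B = 1)
    (hD : (Aᴴ * B).IsHermitian)
    (v : Fin n → ℂ)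
    (hmem : ∃ x y : Fin m → ℂ, v = A.mulVec x + B.mulVec y)
    (hfix : (((2 : ℂ) • (B * Bᴴ) - 1) * ((2 : ℂ) • (A * Aᴴ) - 1)).mulVec v = v) :
    (A * Aᴴ).mulVec v = v ∧ (B * Bᴴ).mulVec v = v := by
  obtain ⟨x, y, hv⟩ := hmem
  have hQ : ((2 : ℂ) • (B * Bᴴ) - 1) * ((2 : ℂ) • (B * Bᴴ) - 1) = 1 := by
    have h : (B * Bᴴ) * (B * Bᴴ) = B * Bᴴ := by
      rw [Matrix.mul_assoc, ← Matrix.mul_assoc Bᴴ, hB, Matrix.one_mul]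
    simp only [Matrix.sub_mul, Matrix.mul_sub, Matrix.smul_mul, Matrix.mul_smul, h,
      Matrix.mul_one, Matrix.one_mul]
    module
  have h1 := congrArg (fun u => ((2 : ℂ) • (B * Bᴴ) - 1).mulVec u) hfix
  simp only [Matrix.mulVec_mulVec] at h1
  rw [← Matrix.mul_assoc, hQ, Matrix.one_mul] at h1
  have hPQ : (A * Aᴴ).mulVec v = (B * Bᴴ).mulVec v := by
    simp only [Matrix.sub_mulVec, Matrix.smul_mulVec, Matrix.one_mulVec] at h1
    exact smul_right_injective _ (two_ne_zero (α := ℂ)) (sub_left_injective h1)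
  set w := v - (A * Aᴴ).mulVec v with hw
  have hAw : Aᴴ.mulVec w = 0 := by
    rw [hw, Matrix.mulVec_sub, Matrix.mulVec_mulVec, ← Matrix.mul_assoc, hA, Matrix.one_mul,
      sub_self]
  have hBw : Bᴴ.mulVec w = 0 := by
    rw [hw, hPQ, Matrix.mulVec_sub, Matrix.mulVec_mulVec, ← Matrix.mul_assoc, hB, Matrix.one_mul,
      sub_self]
  have key : ∀ (C : Matrix (Fin n) (Fin m) ℂ), Cᴴ.mulVec w = 0 → ∀ z,
      star w ⬝ᵥ C.mulVec z = 0 := by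
    intro C hC z
    have h := congrArg star hC
    rw [Matrix.star_mulVec, Matrix.conjTranspose_conjTranspose, star_zero] at h
    rw [Matrix.dotProduct_mulVec, h, zero_dotProduct]
  have hw0 : w = 0 := by
    open scoped ComplexOrder in apply dotProduct_star_self_eq_zero.1
    have e : w = A.mulVec x + B.mulVec y - A.mulVec (Aᴴ.mulVec v) := by
      rw [← hv, Matrix.mulVec_mulVec]
    calc star w ⬝ᵥ w
        = star w ⬝ᵥ (A.mulVec x + B.mulVec y - A.mulVec (Aᴴ.mulVec v)) := by rw [← e]
      _ = 0 := by
        rw [dotProduct_sub, dotProduct_add, key A hAw, key B hBw, key A hAw]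
        simp
  have hP : (A * Aᴴ).mulVec v = v := (sub_eq_zero.mp hw0).symm
  exact ⟨hP, hPQ ▸ hP⟩
end

section
/- Let d ≥ 1, s ≥ 1, and t ≥ 0 be integers, let U_0, U_1, …, U_t be d×d complex matrices, and let l : [d] → [s] ∪ {⊥} be a function (a partial assignment of a bit-position to each index). For each bit string x ∈ {0,1}^s, let O_x be the d×d diagonal matrix whose k-th diagonal entry is (−1)^{x_{l(k)}} if l(k) ∈ [s] and is 1 if l(k) = ⊥, and let W_x = U_t · O_x · U_{t−1} · O_x ⋯ U_1 · O_x · U_0 (the alternating product with t occurrences of O_x). Then there exist d×d complex matrices M_T, one for each subset T ⊆ [s] with |T| ≤ t, depending only on U_0, …, U_t and l but not on x, such that for every x ∈ {0,1}^s: W_x = Σ_{T ⊆ [s], |T| ≤ t} (−1)^{Σ_{i∈T} x_i} · M_T. -/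
open Matrix

/-- The alternating product `U_t · O · U_{t−1} · O ⋯ U_1 · O · U_0`
with `t` occurrences of the oracle matrix `O`. -/
noncomputable def altProd (d : ℕ) : (t : ℕ) → (Fin (t + 1) → Matrix (Fin d) (Fin d) ℂ) →
    Matrix (Fin d) (Fin d) ℂ → Matrix (Fin d) (Fin d) ℂ
  | 0, U, _ => U 0
  | t + 1, U, O => U (Fin.last (t + 1)) * O * altProd d t (fun i => U i.castSucc) O

/-- The `±`-type bit-probe oracle for a bit string `x : {0,1}^s` together with a
partial assignment `l` of a bit-position to each index: the diagonal matrix whose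
`k`-th diagonal entry is `(−1)^{x_{l(k)}}` if `l k = some i` and `1` if `l k = ⊥`. -/
noncomputable def probeOracle (d s : ℕ) (l : Fin d → Option (Fin s)) (x : Fin s → Bool) :
    Matrix (Fin d) (Fin d) ℂ :=
  Matrix.diagonal (fun k => match l k with
    | some i => if x i then (-1 : ℂ) else 1
    | none => 1)

/-- The character indexed by `T`. -/
noncomputable def chi11 (s : ℕ) (T : Finset (Fin s)) : (Fin s → Bool) → ℂ :=
  fun x => (-1 : ℂ) ^ (∑ i ∈ T, if x i then 1 else 0)

/-- Span of the characters of degree at most `n`. -/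
noncomputable def V11 (s n : ℕ) : Submodule ℂ ((Fin s → Bool) → ℂ) :=
  Submodule.span ℂ
    (chi11 s '' ((Finset.univ.filter (fun T : Finset (Fin s) => T.card ≤ n) :
      Finset (Finset (Fin s))) : Set (Finset (Fin s))))

lemma V11_mono (s n : ℕ) : V11 s n ≤ V11 s (n + 1) := by
  apply Submodule.span_mono
  apply Set.image_mono
  intro T hT
  simp at hT ⊢
  omega

lemma V11_mul (s n : ℕ) (i : Fin s) (f : (Fin s → Bool) → ℂ) (hf : f ∈ V11 s n) :
    (fun x => (if x i then (-1 : ℂ) else 1) * f x) ∈ V11 s (n + 1) := by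
  induction hf using Submodule.span_induction with
  | mem g hg =>
    obtain ⟨T, hT, rfl⟩ := hg
    have hT' : T.card ≤ n := by simpa using hT
    by_cases hi : i ∈ T
    · refine Submodule.subset_span ⟨T.erase i, ?_, ?_⟩
      · have := Finset.card_erase_le (s := T) (a := i)
        simp only [Finset.coe_filter, Finset.mem_univ, true_and, Set.mem_ofPred_eq]
        omega
      · funext x
        simp only [chi11]
        rw [← Finset.add_sum_erase T _ hi, pow_add]
        by_cases hx : x i <;> simp [hx]
    · refine Submodule.subset_span ⟨insert i T, ?_, ?_⟩
      · have := Finset.card_insert_le i T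
        simp only [Finset.coe_filter, Finset.mem_univ, true_and, Set.mem_ofPred_eq]
        omega
      · funext x
        simp only [chi11]
        rw [Finset.sum_insert hi, pow_add]
        by_cases hx : x i <;> simp [hx]
  | zero => 
    convert (V11 s (n+1)).zero_mem using 1
    funext x; simp
  | add g h _ _ hg hh =>
    convert (V11 s (n+1)).add_mem hg hh using 1
    funext x; simp [mul_add]
  | smul c g _ hg =>
    convert (V11 s (n+1)).smul_mem c hg using 1
    funext x; simp

lemma altProd_mem11 (d s t : ℕ) (U : Fin (t + 1) → Matrix (Fin d) (Fin d) ℂ)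
    (l : Fin d → Option (Fin s)) (a b : Fin d) :
    (fun x => altProd d t U (probeOracle d s l x) a b) ∈ V11 s t := by
  induction t generalizing a with
  | zero =>
    have h : chi11 s ∅ ∈ V11 s 0 := Submodule.subset_span ⟨∅, by simp, rfl⟩
    convert (V11 s 0).smul_mem (U 0 a b) h using 1
    funext x; simp [altProd, chi11]
  | succ t ih =>
    have key : ∀ k, (fun x => U (Fin.last (t + 1)) a k *
        ((match l k with
          | some i => if x i then (-1 : ℂ) else 1
          | none => 1) * altProd d t (fun i => U i.castSucc) (probeOracle d s l x) k b))
        ∈ V11 s (t + 1) := by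
      intro k
      refine (V11 s (t+1)).smul_mem (U (Fin.last (t + 1)) a k) ?_
      have h := ih (fun i => U i.castSucc) k
      cases hl : l k with
      | none => simpa using V11_mono s t h
      | some i => exact V11_mul s t i _ h
    convert (V11 s (t+1)).sum_mem (fun k (_ : k ∈ Finset.univ) => key k) using 1
    funext x
    rw [Finset.sum_apply]
    simp only [altProd]
    rw [Matrix.mul_apply]
    refine Finset.sum_congr rfl fun k _ => ?_
    conv_lhs => rw [probeOracle, Matrix.mul_diagonal, mul_assoc]
    rfl

/-- For any unitaries `U_0, …, U_t` on `ℂ^d` and any partial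
assignment `l : [d] → [s] ∪ {⊥}`, there exist matrices `M_T`, one for each
`T ⊆ [s]` with `|T| ≤ t` and independent of `x`, such that for every bit string
`x ∈ {0,1}^s` the transform `W_x = U_t O_x U_{t−1} O_x ⋯ U_1 O_x U_0` decomposes
as `W_x = Σ_{T ⊆ [s], |T| ≤ t} (−1)^{Σ_{i∈T} x_i} · M_T`. -/
theorem stmt11 (d s t : ℕ) (hd : 1 ≤ d) (hs : 1 ≤ s)
    (U : Fin (t + 1) → Matrix (Fin d) (Fin d) ℂ)
    (l : Fin d → Option (Fin s)) :
    ∃ M : Finset (Fin s) → Matrix (Fin d) (Fin d) ℂ,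
      ∀ x : Fin s → Bool,
        altProd d t U (probeOracle d s l x) =
          ∑ T ∈ (Finset.univ : Finset (Finset (Fin s))).filter (fun T => T.card ≤ t),
            ((-1 : ℂ) ^ (∑ i ∈ T, if x i then 1 else 0) • M T) := by
  have h : ∀ a b, ∃ c : Finset (Fin s) → ℂ,
      ∑ T ∈ (Finset.univ : Finset (Finset (Fin s))).filter (fun T => T.card ≤ t),
        c T • chi11 s T = fun x => altProd d t U (probeOracle d s l x) a b := fun a b =>
    (Submodule.mem_span_image_finset_iff_exists_fun' ℂ).1 (altProd_mem11 d s t U l a b)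
  choose c hc using h
  refine ⟨fun T => Matrix.of fun a b => c a b T, fun x => ?_⟩
  ext a b
  have := congrFun (hc a b) x
  rw [← this, Finset.sum_apply, Matrix.sum_apply]
  refine Finset.sum_congr rfl fun T _ => ?_
  simp only [Pi.smul_apply, Matrix.smul_apply, Matrix.of_apply, smul_eq_mul, chi11]
  ring
end

section
/- Let d ≥ 1, m ≥ 1, n ≥ 1 be integers. Let A₀ and A₁ be subspaces of ℂ^d that are mutually orthogonal (⟨a,b⟩ = 0 for all a ∈ A₀, b ∈ A₁). Suppose that for each i ∈ [m] we are given a nonzero vector ψ_i ∈ ℂ^d, and for each subset S ⊆ [m] with |S| ≤ n a d×d unitary matrix W_S such that W_S·ψ_i ∈ A₁ whenever i ∈ S, and W_S·ψ_i ∈ A₀ whenever i ∉ S. Then the family of n-th Kronecker powers {W_S^{⊗n} : S ⊆ [m], |S| ≤ n} is linearly independent over ℂ (in the space of matrices indexed by (Fin n → Fin d)). -/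
open Matrix

/-- The `n`-th Kronecker power of a `d×d` matrix, indexed by tuples
`Fin n → Fin d`, with entries `(M^{⊗n})_{i,j} = Π_{k<n} M_{i(k), j(k)}`. -/
noncomputable def kronPow (d n : ℕ) (M : Matrix (Fin d) (Fin d) ℂ) :
    Matrix (Fin n → Fin d) (Fin n → Fin d) ℂ :=
  fun i j => ∏ k : Fin n, M (i k) (j k)

lemma kronPow_pairing (d n : ℕ) (M : Matrix (Fin d) (Fin d) ℂ) (a b : Fin n → Fin d → ℂ) :
    ∑ i : Fin n → Fin d, ∑ j : Fin n → Fin d,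
      (∏ k, a k (i k)) * (∏ k, b k (j k)) * kronPow d n M i j
      = ∏ k, ∑ x, a k x * (M.mulVec (b k)) x := by
  rw [Finset.prod_univ_sum, Fintype.piFinset_univ]
  refine Finset.sum_congr rfl fun i _ => ?_
  rw [Finset.prod_mul_distrib]
  simp only [Matrix.mulVec, dotProduct]
  rw [Finset.prod_univ_sum, Fintype.piFinset_univ, Finset.mul_sum]
  refine Finset.sum_congr rfl fun j _ => ?_
  rw [Finset.prod_mul_distrib, kronPow]
  ring

lemma exists_cover (m n : ℕ) (hm : 1 ≤ m) (T : Finset (Fin m)) (hT : T.card ≤ n) :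
    ∃ f : Fin n → Fin m, ∀ i ∈ T, ∃ k, f k = i := by
  refine ⟨fun k => if h : k.val < T.card then (T.equivFin.symm ⟨k.val, h⟩).val else ⟨0, hm⟩, ?_⟩
  intro i hi
  refine ⟨⟨(T.equivFin ⟨i, hi⟩).val, lt_of_lt_of_le (T.equivFin ⟨i, hi⟩).isLt hT⟩, ?_⟩
  simp

/-- Let `A₀, A₁` be mutually orthogonal subspaces of `ℂ^d`
(with respect to the standard inner product `⟨a,b⟩ = Σ_k conj(a k) · b k`),
`ψ_i` nonzero vectors for `i ∈ [m]`, and for each `S ⊆ [m]` with `|S| ≤ n`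
a unitary `W_S` such that `W_S ψ_i ∈ A₁` for `i ∈ S` and `W_S ψ_i ∈ A₀` for
`i ∉ S`.  Then the family `{W_S^{⊗n} : S ⊆ [m], |S| ≤ n}` of `n`-th Kronecker
powers is linearly independent over `ℂ`. -/
theorem stmt12 (d m n : ℕ) (hd : 1 ≤ d) (hm : 1 ≤ m) (hn : 1 ≤ n)
    (A₀ A₁ : Submodule ℂ (Fin d → ℂ))
    (horth : ∀ a ∈ A₀, ∀ b ∈ A₁, ∑ k, (starRingEnd ℂ) (a k) * b k = 0)
    (ψ : Fin m → (Fin d → ℂ)) (hψ : ∀ i, ψ i ≠ 0)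
    (W : Finset (Fin m) → Matrix (Fin d) (Fin d) ℂ)
    (hunit : ∀ S : Finset (Fin m), S.card ≤ n → (W S)ᴴ * W S = 1)
    (hyes : ∀ S : Finset (Fin m), S.card ≤ n → ∀ i ∈ S, (W S).mulVec (ψ i) ∈ A₁)
    (hno : ∀ S : Finset (Fin m), S.card ≤ n → ∀ i ∉ S, (W S).mulVec (ψ i) ∈ A₀) :
    LinearIndependent ℂ
      (fun S : {S : Finset (Fin m) // S.card ≤ n} => kronPow d n (W S.val)) := by
  classical
  rw [Fintype.linearIndependent_iff]
  intro g hg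
  by_contra hne
  push Not at hne
  obtain ⟨S₀, hS₀⟩ := hne
  obtain ⟨T, hT, hmax⟩ := Finset.exists_max_image
    (Finset.univ.filter fun S : {S : Finset (Fin m) // S.card ≤ n} => g S ≠ 0)
    (fun S => S.val.card) ⟨S₀, by simpa using hS₀⟩
  have hgT : g T ≠ 0 := by simpa using hT
  obtain ⟨f, hf⟩ := exists_cover m n hm T.val T.property
  have key : ∑ S : {S : Finset (Fin m) // S.card ≤ n}, g S * ∏ k : Fin n,
      ∑ x, star ((W T.val).mulVec (ψ (f k)) x) * (W S.val).mulVec (ψ (f k)) x = 0 := by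
    have h1 := fun S : {S : Finset (Fin m) // S.card ≤ n} => kronPow_pairing d n (W S.val)
      (fun k x => star ((W T.val).mulVec (ψ (f k)) x)) (fun k => ψ (f k))
    simp only [← h1, Finset.mul_sum]
    rw [Finset.sum_comm]
    refine Finset.sum_eq_zero fun i _ => ?_
    rw [Finset.sum_comm]
    refine Finset.sum_eq_zero fun j _ => ?_
    have h2 := congrFun (congrFun hg i) j
    simp only [Matrix.sum_apply, Matrix.smul_apply, smul_eq_mul, Matrix.zero_apply] at h2
    simp only [mul_left_comm (g _)]
    rw [← Finset.mul_sum, h2, mul_zero]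
  rw [Finset.sum_eq_single T] at key
  · rcases mul_eq_zero.mp key with h | h
    · exact hgT h
    · obtain ⟨k, -, hk⟩ := Finset.prod_eq_zero_iff.mp h
      have h3 : star ((W T.val).mulVec (ψ (f k))) ⬝ᵥ (W T.val).mulVec (ψ (f k)) = 0 := hk
      have h4 : (W T.val).mulVec (ψ (f k)) = 0 := by
        open scoped ComplexOrder in exact dotProduct_star_self_eq_zero.mp h3
      apply hψ (f k)
      have h5 := congrArg ((W T.val)ᴴ).mulVec h4
      rwa [Matrix.mulVec_mulVec, hunit _ T.property, Matrix.one_mulVec, Matrix.mulVec_zero] at h5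
  · intro S _ hST
    by_cases hgS : g S = 0
    · rw [hgS, zero_mul]
    have hle := hmax S (by simpa using hgS)
    have hns : ¬ T.val ⊆ S.val := fun hsub =>
      hST (Subtype.ext (Finset.eq_of_subset_of_card_le hsub hle).symm)
    obtain ⟨i, hiT, hiS⟩ := Finset.not_subset.mp hns
    obtain ⟨k, rfl⟩ := hf i hiT
    rw [Finset.prod_eq_zero (Finset.mem_univ k), mul_zero]
    have h6 := congrArg star
      (horth _ (hno S.val S.property _ hiS) _ (hyes T.val T.property _ hiT))
    simpa [mul_comm] using h6
  · intro h
    exact absurd (Finset.mem_univ T) h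
end

section
/- Let V be a real inner product space, let g and b be orthonormal vectors in V, and let θ be a real number. Define u = sin(θ)·g + cos(θ)·b, and define the maps T : V → V by T(x) = x − 2·⟨g,x⟩·g (the reflection negating the g-component) and R : V → V by R(x) = 2·⟨u,x⟩·u − x (the reflection through the line spanned by u). Then for every natural number k, applying the composition R ∘ T exactly k times to u yields (R ∘ T)^k(u) = sin((2k+1)θ)·g + cos((2k+1)θ)·b. -/
open scoped RealInnerProductSpace

/-- Grover iteration: Let `g, b` be orthonormal vectors in a real
inner product space, `θ : ℝ`, `u = sin θ • g + cos θ • b`, let `T` be the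
reflection negating the `g`-component (`T x = x − 2⟨g,x⟩g`, the oracle) and `R`
the reflection through the line spanned by `u` (`R x = 2⟨u,x⟩u − x`).  Then for
every `k`, applying `R ∘ T` exactly `k` times to `u` gives
`sin((2k+1)θ) • g + cos((2k+1)θ) • b`. -/
theorem stmt16 (V : Type*) [NormedAddCommGroup V] [InnerProductSpace ℝ V]
    (g b : V) (hg : ⟪g, g⟫ = 1) (hb : ⟪b, b⟫ = 1) (hgb : ⟪g, b⟫ = 0)
    (θ : ℝ) (u : V) (hu : u = Real.sin θ • g + Real.cos θ • b)
    (T R : V → V)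
    (hT : ∀ x, T x = x - (2 * ⟪g, x⟫) • g)
    (hR : ∀ x, R x = (2 * ⟪u, x⟫) • u - x) :
    ∀ k : ℕ, (R ∘ T)^[k] u =
      Real.sin ((2 * k + 1) * θ) • g + Real.cos ((2 * k + 1) * θ) • b := by
  intro k
  have hbg : ⟪b, g⟫ = 0 := by rw [real_inner_comm]; exact hgb
  induction k with
  | zero => simp [hu]
  | succ k ih =>
    rw [Function.iterate_succ_apply', ih]
    have e : (2 * ((k + 1 : ℕ) : ℝ) + 1) * θ = (2 * k + 1) * θ + 2 * θ := by
      push_cast; ring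
    rw [e]
    generalize (2 * (k : ℝ) + 1) * θ = a
    have h1 : T (Real.sin a • g + Real.cos a • b)
        = (-Real.sin a) • g + Real.cos a • b := by
      rw [hT]
      simp only [inner_add_right, inner_smul_right, hg, hgb]
      module
    have h2 : ⟪u, (-Real.sin a) • g + Real.cos a • b⟫
        = Real.cos θ * Real.cos a - Real.sin θ * Real.sin a := by
      rw [hu]
      simp only [inner_add_right, inner_add_left, real_inner_smul_right,
        real_inner_smul_left, hg, hgb, hbg, hb]
      ring
    rw [Function.comp_apply, h1, hR, h2, hu]
    have hs := Real.sin_sq_add_cos_sq θ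
    have s1 : Real.sin (a + 2 * θ) =
        2 * (Real.cos θ * Real.cos a - Real.sin θ * Real.sin a) * Real.sin θ
          + Real.sin a := by
      rw [Real.sin_add, Real.sin_two_mul, Real.cos_two_mul]
      linear_combination (2 * Real.sin a) * hs
    have s2 : Real.cos (a + 2 * θ) =
        2 * (Real.cos θ * Real.cos a - Real.sin θ * Real.sin a) * Real.cos θ
          - Real.cos a := by
      rw [Real.cos_add, Real.sin_two_mul, Real.cos_two_mul]
      ring
    rw [s1, s2]
    module
end
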